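/- arXiv:1404.0956 — 3 statements merged into one kernel-verified Lean document; each statement's English description precedes it below -/
import Mathlib

section
/- SK-calculus is combinatorially complete: for all pairwise distinct variables x1,…,xn and every SK-term M whose free variables are among {x1,…,xn}, there exists a closed SK-combinator G (one may take G = λ*x1.…λ*xn.M) such that for all SK-combinators X1,…,Xn it holds that G X1 ⋯ Xn →* M[X1/x1,…,Xn/xn], the simultaneous substitution of the Xi for the xi in M. -/
/-! SK-terms: SK-combinators extended with variables. -/

inductive SKt : Type
  | var : ℕ → SKt
  | S : SKt
  | K : SKt
  | app : SKt → SKt → SKt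
  deriving DecidableEq

/-- The reduction relation of SK-calculus (on SK-terms; variables are inert). -/
inductive SKred : SKt → SKt → Prop
  | Srule (M N X : SKt) :
      SKred (.app (.app (.app .S M) N) X) (.app (.app M X) (.app N X))
  | Krule (X Y : SKt) : SKred (.app (.app .K X) Y) X
  | appL {M M' : SKt} (N : SKt) : SKred M M' → SKred (.app M N) (.app M' N)
  | appR (M : SKt) {N N' : SKt} : SKred N N' → SKred (.app M N) (.app M N')

/-- Closed SK-combinators. -/
inductive SK : Type
  | S : SK
  | K : SK
  | app : SK → SK → SK
  deriving DecidableEq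

/-- Inclusion of SK-combinators into SK-terms. -/
def SK.toTerm : SK → SKt
  | .S => .S
  | .K => .K
  | .app M N => .app M.toTerm N.toTerm

/-- Free variables of an SK-term. -/
def SKt.fv : SKt → Finset ℕ
  | .var y => {y}
  | .S => ∅
  | .K => ∅
  | .app M N => M.fv ∪ N.fv

/-- Simultaneous substitution: replace each variable `y` by `f y`. -/
def SKt.msub (f : ℕ → SKt) : SKt → SKt
  | .var y => f y
  | .S => .S
  | .K => .K
  | .app M N => .app (SKt.msub f M) (SKt.msub f N)

/-- Iterated application `G X₁ ⋯ Xₙ`. -/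
def SKt.applyList (G : SKt) (Xs : List SKt) : SKt := Xs.foldl SKt.app G

namespace SKproof

def abs (x : ℕ) : SKt → SKt
  | .var y => if y = x then .app (.app .S .K) .K else .app .K (.var y)
  | .S => .app .K .S
  | .K => .app .K .K
  | .app M N => .app (.app .S (abs x M)) (abs x N)

theorem red_app {M M' N N' : SKt} (h : Relation.ReflTransGen SKred M M')
    (h' : Relation.ReflTransGen SKred N N') :
    Relation.ReflTransGen SKred (.app M N) (.app M' N') :=
  (h.lift (fun T => SKt.app T N) (fun _ _ r => SKred.appL N r)).trans
    (h'.lift (fun T => SKt.app M' T) (fun _ _ r => SKred.appR M' r))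

theorem abs_beta (x : ℕ) (σ : ℕ → SKt) (X : SKt) (M : SKt) :
    Relation.ReflTransGen SKred (.app (SKt.msub σ (abs x M)) X)
      (SKt.msub (Function.update σ x X) M) := by
  induction M with
  | var y =>
    by_cases h : y = x
    · subst h
      simp only [abs, if_true, SKt.msub, Function.update_self]
      exact (Relation.ReflTransGen.single (SKred.Srule _ _ _)).tail (SKred.Krule _ _)
    · simp only [abs, if_neg h, SKt.msub, Function.update_of_ne h]
      exact .single (SKred.Krule _ _)
  | S => exact .single (SKred.Krule _ _)
  | K => exact .single (SKred.Krule _ _)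
  | app M N hM hN =>
    exact (Relation.ReflTransGen.single (SKred.Srule _ _ _)).trans (red_app hM hN)

theorem fv_abs (x : ℕ) (M : SKt) : ∀ y ∈ (abs x M).fv, y ∈ M.fv ∧ y ≠ x := by
  induction M with
  | var z =>
    intro y
    by_cases h : z = x
    · simp [abs, h, SKt.fv]
    · simp only [abs, if_neg h, SKt.fv]
      simp
      rintro rfl
      exact ⟨rfl, h⟩
  | S => simp [abs, SKt.fv]
  | K => simp [abs, SKt.fv]
  | app M N hM hN =>
    intro y
    simp only [abs, SKt.fv, Finset.mem_union, Finset.notMem_empty, false_or]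
    rintro (h | h)
    · exact ⟨Or.inl (hM y h).1, (hM y h).2⟩
    · exact ⟨Or.inr (hN y h).1, (hN y h).2⟩

theorem fv_absList (xs : List ℕ) (M : SKt) :
    ∀ y ∈ (xs.foldr abs M).fv, y ∈ M.fv ∧ y ∉ xs := by
  induction xs with
  | nil => simp
  | cons x xs ih =>
    intro y hy
    obtain ⟨h1, h2⟩ := fv_abs x _ y hy
    obtain ⟨h3, h4⟩ := ih y h1
    exact ⟨h3, by simp [h2, h4]⟩

theorem closed (M : SKt) (h : ∀ y, y ∉ M.fv) : ∃ G : SK, G.toTerm = M := by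
  induction M with
  | var y => exact absurd (by simp [SKt.fv]) (h y)
  | S => exact ⟨.S, rfl⟩
  | K => exact ⟨.K, rfl⟩
  | app M N hM hN =>
    simp only [SKt.fv, Finset.mem_union, not_or] at h
    obtain ⟨G, rfl⟩ := hM fun y => (h y).1
    obtain ⟨H, rfl⟩ := hN fun y => (h y).2
    exact ⟨.app G H, rfl⟩

theorem msub_var (M : SKt) : SKt.msub SKt.var M = M := by
  induction M with
  | var y => rfl
  | S => rfl
  | K => rfl
  | app M N hM hN => simp [SKt.msub, hM, hN]

theorem red_applyList (Xs : List SKt) : ∀ {G H : SKt}, Relation.ReflTransGen SKred G H →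
    Relation.ReflTransGen SKred (SKt.applyList G Xs) (SKt.applyList H Xs) := by
  induction Xs with
  | nil => intro G H h; exact h
  | cons X Xs ih => intro G H h; exact ih (red_app h .refl)

theorem lookup_none (x : ℕ) (xs : List ℕ) (h : x ∉ xs) :
    ∀ Xs : List SKt, (xs.zip Xs).lookup x = none := by
  induction xs with
  | nil => simp
  | cons z xs ih =>
    intro Xs
    simp only [List.mem_cons, not_or] at h
    cases Xs with
    | nil => simp
    | cons X Xs =>
      have : (x == z) = false := by simpa using h.1
      simp [List.lookup, this, ih h.2 Xs]

theorem absList_beta (M : SKt) (xs : List ℕ) : xs.Nodup → ∀ (Xs : List SKt) (σ : ℕ → SKt),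
    Xs.length = xs.length →
    Relation.ReflTransGen SKred (SKt.applyList (SKt.msub σ (xs.foldr abs M)) Xs)
      (SKt.msub (fun y => ((xs.zip Xs).lookup y).getD (σ y)) M) := by
  induction xs with
  | nil =>
    intro _ Xs σ h
    obtain rfl : Xs = [] := by simpa using h
    exact .refl
  | cons x xs ih =>
    intro hnd Xs σ h
    obtain ⟨hx, hnd⟩ := List.nodup_cons.1 hnd
    cases Xs with
    | nil => simp at h
    | cons X Xs =>
      have key := (red_applyList Xs (abs_beta x σ X (xs.foldr abs M))).trans
        (ih hnd Xs (Function.update σ x X) (by simpa using h))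
      suffices e : (fun y => (((x :: xs).zip (X :: Xs)).lookup y).getD (σ y)) =
          (fun y => ((xs.zip Xs).lookup y).getD (Function.update σ x X y)) by
        rw [e]
        exact key
      funext y
      by_cases hy : y = x
      · subst hy
        simp [lookup_none y xs hx Xs]
      · have : (y == x) = false := by simpa using hy
        simp [List.lookup, this, Function.update_of_ne hy]

end SKproof

/-- SK-calculus is combinatorially complete: for pairwise distinct
variables `x₁,…,xₙ` and an SK-term `M` with free variables among them, there is a
closed SK-combinator `G` such that `G X₁ ⋯ Xₙ →* M[X₁/x₁,…,Xₙ/xₙ]` for all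
SK-combinators `X₁,…,Xₙ`. -/
theorem SK_combinatorially_complete (xs : List ℕ) (hnd : xs.Nodup) (M : SKt)
    (hfv : ∀ x ∈ M.fv, x ∈ xs) :
    ∃ G : SK, ∀ Xs : List SK, Xs.length = xs.length →
      Relation.ReflTransGen SKred
        (SKt.applyList G.toTerm (Xs.map SK.toTerm))
        (SKt.msub
          (fun y => (((xs.zip (Xs.map SK.toTerm)).lookup y).getD (SKt.var y))) M) := by
  obtain ⟨G, hG⟩ := SKproof.closed (xs.foldr SKproof.abs M) (fun y hy =>
    (SKproof.fv_absList xs M y hy).2 (hfv y (SKproof.fv_absList xs M y hy).1))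
  refine ⟨G, fun Xs h => ?_⟩
  have key := SKproof.absList_beta M xs hnd (Xs.map SK.toTerm) SKt.var (by simpa using h)
  rw [SKproof.msub_var, ← hG] at key
  exact key
end

section
/- Factorisation of SK-combinators is not representable within SK-calculus: there is no SK-combinator F such that, writing =_SK for the least equivalence relation containing the SK reduction relation →, both (a) F A M N =_SK M for all SK-combinators M, N and every atom A ∈ {S, K}, and (b) F (X Y) M N =_SK N X Y for all SK-combinators M, N and every compound X Y, where the compounds are the partially applied operators that are applications, i.e., the combinators of one of the forms S Z, S Z W, or K Z. -/
/-- The reduction relation of SK-calculus. -/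
inductive SKcred : SK → SK → Prop
  | Srule (M N X : SK) :
      SKcred (.app (.app (.app .S M) N) X) (.app (.app M X) (.app N X))
  | Krule (X Y : SK) : SKcred (.app (.app .K X) Y) X
  | appL {M M' : SK} (N : SK) : SKcred M M' → SKcred (.app M N) (.app M' N)
  | appR (M : SK) {N N' : SK} : SKcred N N' → SKcred (.app M N) (.app M N')

/-- The compounds of SK-calculus: the partially applied operators that are
applications, namely the combinators of the forms `S Z`, `S Z W` and `K Z`. -/
inductive SKcompound : SK → Prop
  | SZ (Z : SK) : SKcompound (.app .S Z)
  | SZW (Z W : SK) : SKcompound (.app (.app .S Z) W)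
  | KZ (Z : SK) : SKcompound (.app .K Z)

/-- Equality `=_SK` of SK-combinators: the least equivalence relation
containing the reduction relation. -/
def SKeq : SK → SK → Prop := Relation.EqvGen SKcred

/-- Points of the Engeler graph model. -/
inductive EPt : Type
  | a : EPt
  | p : List EPt → EPt → EPt

/-- Coercion of a list to the set of its members. -/
def eL (l : List EPt) : Set EPt := {x | x ∈ l}

/-- Application in the graph model. -/
def eap (M N : Set EPt) : Set EPt := {b | ∃ l : List EPt, eL l ⊆ N ∧ EPt.p l b ∈ M}

def eK : Set EPt := {c | ∃ l m b, c = EPt.p l (EPt.p m b) ∧ b ∈ l}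

def eS : Set EPt := {c | ∃ l m n b, c = EPt.p l (EPt.p m (EPt.p n b)) ∧
  b ∈ eap (eap (eL l) (eL n)) (eap (eL m) (eL n))}

theorem eap_mono {M M' N N' : Set EPt} (h : M ⊆ M') (h' : N ⊆ N') : eap M N ⊆ eap M' N' := by
  rintro b ⟨l, h1, h2⟩
  exact ⟨l, h1.trans h', h h2⟩

theorem eap_K (X Y : Set EPt) : eap (eap eK X) Y = X := by
  ext b
  constructor
  · rintro ⟨m, hm, l, hl, l', m', b', he, hb⟩
    cases he
    exact hl hb
  · intro hb
    refine ⟨[], by simp [eL], [b], ?_, [b], [], b, rfl, by simp⟩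
    intro x hx
    simp only [eL, List.mem_singleton, Set.mem_setOf_eq] at hx
    rwa [hx]

theorem eap_fin (N X : Set EPt) (l : List EPt) : eL l ⊆ eap N X →
    ∃ n x : List EPt, eL n ⊆ N ∧ eL x ⊆ X ∧ eL l ⊆ eap (eL n) (eL x) := by
  induction l with
  | nil => intro _; exact ⟨[], [], by simp [eL], by simp [eL], by simp [eL]⟩
  | cons c l ih =>
    intro h
    obtain ⟨n, x, hn, hx, hl⟩ := ih (fun y hy => h (List.mem_cons_of_mem _ hy))
    obtain ⟨k, hk, hc⟩ : c ∈ eap N X := h (by simp [eL])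
    refine ⟨EPt.p k c :: n, k ++ x, ?_, ?_, ?_⟩
    · intro y hy
      rcases List.mem_cons.1 hy with rfl | hy
      · exact hc
      · exact hn hy
    · intro y hy
      rcases List.mem_append.1 hy with hy | hy
      · exact hk hy
      · exact hx hy
    · intro y hy
      rcases List.mem_cons.1 hy with rfl | hy
      · exact ⟨k, fun z hz => List.mem_append_left _ hz, by simp [eL]⟩
      · exact eap_mono (fun z hz => List.mem_cons_of_mem _ hz)
          (fun z hz => List.mem_append_right _ hz) (hl hy)

theorem eap_S (M N X : Set EPt) : eap (eap (eap eS M) N) X = eap (eap M X) (eap N X) := by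
  ext b
  constructor
  · rintro ⟨n, hn, m, hm, l, hl, l', m', n', b', he, hb⟩
    cases he
    exact eap_mono (eap_mono hl hn) (eap_mono hm hn) hb
  · rintro ⟨l, hl, k, hk, hM⟩
    obtain ⟨n, x, hn, hx, hl'⟩ := eap_fin N X l hl
    refine ⟨k ++ x, ?_, n, hn, [EPt.p k (EPt.p l b)], ?_, _, _, _, _, rfl, ?_⟩
    · intro y hy
      rcases List.mem_append.1 hy with hy | hy
      · exact hk hy
      · exact hx hy
    · intro y hy
      rcases List.mem_singleton.1 hy with rfl
      exact hM
    · refine ⟨l, hl'.trans (eap_mono subset_rfl fun z hz => List.mem_append_right _ hz), k,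
        fun z hz => List.mem_append_left _ hz, by simp [eL]⟩

/-- Interpretation of combinators in the graph model. -/
def eden : SK → Set EPt
  | .S => eS
  | .K => eK
  | .app M N => eap (eden M) (eden N)

theorem eden_red {M N : SK} (h : SKcred M N) : eden M = eden N := by
  induction h with
  | Srule M N X => exact eap_S _ _ _
  | Krule X Y => exact eap_K _ _
  | appL N _ ih => simp only [eden, ih]
  | appR M _ ih => simp only [eden, ih]

theorem eden_eq {M N : SK} (h : SKeq M N) : eden M = eden N := by
  induction h with
  | rel _ _ h => exact eden_red h
  | refl _ => rfl
  | symm _ _ _ ih => exact ih.symm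
  | trans _ _ _ _ _ ih ih' => exact ih.trans ih'

/-- `S K Z` denotes the same set for every `Z`. -/
theorem eap_SK (Z : Set EPt) : eap (eap eS eK) Z = {c | ∃ n b, c = EPt.p n b ∧ b ∈ n} := by
  ext c
  constructor
  · rintro ⟨m, hm, l, hl, l', m', n, b, he, hb⟩
    cases he
    refine ⟨n, b, rfl, ?_⟩
    have := eap_mono (eap_mono hl (subset_refl (eL n))) (subset_refl (eap (eL m) (eL n))) hb
    rw [eap_K] at this
    exact this
  · rintro ⟨n, b, rfl, hb⟩
    refine ⟨[], by simp [eL], [EPt.p [b] (EPt.p [] b)], ?_, _, _, _, _, rfl, ?_⟩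
    · intro y hy
      rcases List.mem_singleton.1 hy with rfl
      exact ⟨_, _, _, rfl, by simp⟩
    · refine ⟨[], by simp [eL], [b], ?_, by simp [eL]⟩
      intro y hy
      rcases List.mem_singleton.1 hy with rfl
      exact hb

theorem eS_ne_eK : eS ≠ eK := by
  intro h
  have : EPt.p [EPt.a] (EPt.p [] EPt.a) ∈ eK := ⟨_, _, _, rfl, by simp⟩
  rw [← h] at this
  obtain ⟨l, m, n, b, he, _⟩ := this
  cases he

/-- Factorisation of SK-combinators is not representable within
SK-calculus: there is no SK-combinator `F` with `F A M N =_SK M` for all atoms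
`A ∈ {S, K}` and `F (X Y) M N =_SK N X Y` for all compounds `X Y`. -/
theorem no_factorisation_in_SK :
    ¬ ∃ F : SK,
      (∀ M N : SK, SKeq (.app (.app (.app F .S) M) N) M) ∧
      (∀ M N : SK, SKeq (.app (.app (.app F .K) M) N) M) ∧
      (∀ X Y M N : SK, SKcompound (.app X Y) →
        SKeq (.app (.app (.app F (.app X Y)) M) N) (.app (.app N X) Y)) := by
  rintro ⟨F, -, -, hF⟩
  have h1 := eden_eq (hF (.app .S .K) .K .S (.app .K (.app (.app .S .K) .K)) (.SZW _ _))
  have h2 := eden_eq (hF (.app .S .K) .S .S (.app .K (.app (.app .S .K) .K)) (.SZW _ _))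
  simp only [eden] at h1 h2
  rw [eap_SK eS, ← eap_SK eK, h1] at h2
  simp only [eap_K, eap_S] at h2
  exact eS_ne_eK h2.symm
end

section
/- The translation from SK-calculus to SF-calculus given by ⟦S⟧ = S, ⟦K⟧ = F F, and ⟦M N⟧ = ⟦M⟧ ⟦N⟧ is a reduction-preserving and reduction-reflecting homomorphism: (i) if M → N in SK-calculus then ⟦M⟧ → ⟦N⟧ in SF-calculus (in a single step); and (ii) if ⟦M⟧ → T in SF-calculus then there exists an SK-combinator N with M → N in SK-calculus and T = ⟦N⟧. -/
/-! SF-calculus: combinators, compounds and reduction. -/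

inductive SF : Type
  | S : SF
  | F : SF
  | app : SF → SF → SF
  deriving DecidableEq

/-- The compounds of SF-calculus: factorable forms that are applications,
i.e. the combinators of the forms `S Z`, `S Z W`, `F Z`, `F Z W`. -/
inductive SFcompound : SF → Prop
  | SZ (Z : SF) : SFcompound (.app .S Z)
  | SZW (Z W : SF) : SFcompound (.app (.app .S Z) W)
  | FZ (Z : SF) : SFcompound (.app .F Z)
  | FZW (Z W : SF) : SFcompound (.app (.app .F Z) W)

/-- The reduction relation of SF-calculus. -/
inductive SFred : SF → SF → Prop
  | Srule (M N X : SF) :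
      SFred (.app (.app (.app .S M) N) X) (.app (.app M X) (.app N X))
  | FS (M N : SF) : SFred (.app (.app (.app .F .S) M) N) M
  | FF (M N : SF) : SFred (.app (.app (.app .F .F) M) N) M
  | Fcomp (X Y M N : SF) : SFcompound (.app X Y) →
      SFred (.app (.app (.app .F (.app X Y)) M) N) (.app (.app N X) Y)
  | appL {M M' : SF} (N : SF) : SFred M M' → SFred (.app M N) (.app M' N)
  | appR (M : SF) {N N' : SF} : SFred N N' → SFred (.app M N) (.app M N')

/-- The translation from SK-calculus to SF-calculus:
`⟦S⟧ = S`, `⟦K⟧ = F F`, `⟦M N⟧ = ⟦M⟧ ⟦N⟧`. -/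
def trSKSF : SK → SF
  | .S => .S
  | .K => .app .F .F
  | .app M N => .app (trSKSF M) (trSKSF N)

theorem trSKSF_ne_F (M : SK) : trSKSF M ≠ .F := by
  cases M <;> simp [trSKSF]

theorem trSKSF_eq_S {M : SK} (h : .S = trSKSF M) : M = .S := by
  cases M <;> simp [trSKSF] at h ⊢

theorem trSKSF_eq_app {M : SK} {A B : SF} (h : .app A B = trSKSF M) :
    (M = .K ∧ A = .F ∧ B = .F) ∨ ∃ P Q, M = .app P Q ∧ A = trSKSF P ∧ B = trSKSF Q := by
  cases M <;> simp_all [trSKSF]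

theorem trSKSF_no_FX {M : SK} {X : SF} (h : .app .F X = trSKSF M) : M = .K ∧ X = .F := by
  rcases trSKSF_eq_app h with ⟨h1, _, h2⟩ | ⟨P, Q, _, h2, _⟩
  · exact ⟨h1, h2⟩
  · exact absurd h2.symm (trSKSF_ne_F P)

theorem trSKSF_reflects {U T : SF} (h : SFred U T) :
    ∀ M : SK, U = trSKSF M → ∃ N : SK, SKcred M N ∧ T = trSKSF N := by
  have noF : ∀ T, ¬ SFred .F T := by intro T h; cases h
  induction h with
  | Srule A B X =>
    intro M h
    rcases trSKSF_eq_app h with ⟨_, h1, _⟩ | ⟨P, Q, rfl, h1, rfl⟩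
    · cases h1
    rcases trSKSF_eq_app h1 with ⟨_, h1, _⟩ | ⟨P, R, rfl, h2, rfl⟩
    · cases h1
    rcases trSKSF_eq_app h2 with ⟨_, h1, _⟩ | ⟨P, L, rfl, h3, rfl⟩
    · cases h1
    obtain rfl := trSKSF_eq_S h3
    exact ⟨_, .Srule _ _ _, rfl⟩
  | FS A B =>
    intro M h
    rcases trSKSF_eq_app h with ⟨_, h1, _⟩ | ⟨P, Q, rfl, h1, rfl⟩
    · cases h1
    rcases trSKSF_eq_app h1 with ⟨_, h1, _⟩ | ⟨P, R, rfl, h2, rfl⟩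
    · cases h1
    cases (trSKSF_no_FX h2).2
  | FF A B =>
    intro M h
    rcases trSKSF_eq_app h with ⟨_, h1, _⟩ | ⟨P, Q, rfl, h1, rfl⟩
    · cases h1
    rcases trSKSF_eq_app h1 with ⟨_, h1, _⟩ | ⟨P, R, rfl, h2, rfl⟩
    · cases h1
    obtain ⟨rfl, _⟩ := trSKSF_no_FX h2
    exact ⟨_, .Krule _ _, rfl⟩
  | Fcomp X Y A B _ =>
    intro M h
    rcases trSKSF_eq_app h with ⟨_, h1, _⟩ | ⟨P, Q, rfl, h1, rfl⟩
    · cases h1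
    rcases trSKSF_eq_app h1 with ⟨_, h1, _⟩ | ⟨P, R, rfl, h2, rfl⟩
    · cases h1
    cases (trSKSF_no_FX h2).2
  | appL B hr ih =>
    intro M h
    rcases trSKSF_eq_app h with ⟨_, h1, _⟩ | ⟨P, Q, rfl, h1, rfl⟩
    · subst h1; exact absurd hr (noF _)
    obtain ⟨N, hN, rfl⟩ := ih P h1
    exact ⟨_, .appL _ hN, rfl⟩
  | appR A hr ih =>
    intro M h
    rcases trSKSF_eq_app h with ⟨_, _, h1⟩ | ⟨P, Q, rfl, rfl, h1⟩
    · subst h1; exact absurd hr (noF _)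
    obtain ⟨N, hN, rfl⟩ := ih Q h1
    exact ⟨_, .appR _ hN, rfl⟩

/-- The translation `⟦S⟧ = S`, `⟦K⟧ = F F`, `⟦M N⟧ = ⟦M⟧ ⟦N⟧` from
SK-calculus to SF-calculus preserves reduction (in a single step) and reflects
reduction. -/
theorem trSKSF_preserves_and_reflects :
    (∀ M N : SK, SKcred M N → SFred (trSKSF M) (trSKSF N)) ∧
    (∀ (M : SK) (T : SF), SFred (trSKSF M) T →
      ∃ N : SK, SKcred M N ∧ T = trSKSF N) := by
  refine ⟨?_, fun M T h => trSKSF_reflects h M rfl⟩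
  intro M N h
  induction h with
  | Srule A B X => exact .Srule _ _ _
  | Krule X Y => exact .FF _ _
  | appL B _ ih => exact .appL _ ih
  | appR A _ ih => exact .appR _ ih
end
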